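/- arXiv:2306.11856 — 2 statements merged into one kernel-verified Lean document; each statement's English description precedes it below -/
import Mathlib

section
/- Let W be an inner product space over ℂ and let L₋₁, L₀, L₁ : W →ₗ[ℂ] W be linear operators satisfying ⟨L₋₁u, v⟩ = ⟨u, L₁v⟩ and ⟨L₀u, v⟩ = ⟨u, L₀v⟩ for all u, v ∈ W, together with the commutation relations L₁ ∘ L₋₁ − L₋₁ ∘ L₁ = 2·L₀ and L₀ ∘ L₁ − L₁ ∘ L₀ = −L₁. If w ∈ W is nonzero, L₀w = s • w for some s ∈ ℂ, and L₁^k w = 0 for some k ∈ ℕ, then s is real and nonnegative (i.e. s.im = 0 and 0 ≤ s.re). -/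
open scoped InnerProductSpace

/-!
`L₁` lowers the `L₀`-weight by one. If `L₁ⁿ w ≠ 0` and `L₁ⁿ⁺¹ w = 0`, then `v = L₁ⁿ w` has weight
`s - n` and is killed by `L₁`, so `L₁ L₋₁ v = [L₁, L₋₁] v = 2 (s - n) v`. As `L₁ L₋₁` is the
composite of `L₋₁` with its formal adjoint, it is positive, hence `0 ≤ n ≤ s`.
-/

section Weights

variable {R M : Type*} [CommRing R] [AddCommGroup M] [Module R M]
  {H E : Module.End R M} {c μ : R} {v : M}

theorem apply_mem_eigenspace_add_of_lie_eq_smul (hHE : ⁅H, E⁆ = c • E)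
    (hv : v ∈ H.eigenspace μ) : E v ∈ H.eigenspace (μ + c) := by
  rw [Module.End.mem_eigenspace_iff] at hv ⊢
  calc H (E v) = E (H v) + ⁅H, E⁆ v := by simp [Ring.lie_def]
    _ = (μ + c) • E v := by rw [hv, hHE, map_smul, LinearMap.smul_apply, add_smul]

theorem pow_apply_mem_eigenspace_add_of_lie_eq_smul (hHE : ⁅H, E⁆ = c • E)
    (hv : v ∈ H.eigenspace μ) (n : ℕ) : (E ^ n) v ∈ H.eigenspace (μ + n * c) := by
  induction n with
  | zero => simpa using hv
  | succ n ih =>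
    have hstep := apply_mem_eigenspace_add_of_lie_eq_smul hHE ih
    rwa [← Module.End.mul_apply, ← pow_succ', add_assoc, ← add_one_mul, ← Nat.cast_succ] at hstep

end Weights

section Positivity

open scoped ComplexOrder

variable {𝕜 V W : Type*} [RCLike 𝕜] [NormedAddCommGroup V] [InnerProductSpace 𝕜 V]
  [NormedAddCommGroup W] [InnerProductSpace 𝕜 W]

theorem isPositive_comp_of_inner_map_eq {A : V →ₗ[𝕜] W} {B : W →ₗ[𝕜] V}
    (hadj : ∀ u v, ⟪A u, v⟫_𝕜 = ⟪u, B v⟫_𝕜) : (B ∘ₗ A).IsPositive := by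
  have hadj_symm (u v) : ⟪B u, v⟫_𝕜 = ⟪u, A v⟫_𝕜 := by
    rw [← inner_conj_symm, ← hadj, inner_conj_symm]
  refine ⟨fun u v => ?_, fun u => ?_⟩
  · rw [LinearMap.comp_apply, hadj_symm, hadj, LinearMap.comp_apply]
  · rw [LinearMap.comp_apply, hadj_symm]
    exact inner_self_nonneg

theorem nonneg_of_isPositive_of_hasEigenvalue {T : W →ₗ[𝕜] W} {μ : 𝕜} (hT : T.IsPositive)
    (hμ : Module.End.HasEigenvalue T μ) : 0 ≤ μ := by
  obtain ⟨v, hv⟩ := hμ.exists_hasEigenvector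
  have hinner : 0 ≤ μ * ⟪v, v⟫_𝕜 := by
    simpa only [hv.apply_eq_smul, inner_smul_right] using hT.inner_nonneg_right v
  have hpos : 0 < ⟪v, v⟫_𝕜 := by
    rw [inner_self_eq_norm_sq_to_K]
    exact_mod_cast pow_pos (norm_pos_iff.mpr hv.2) 2
  exact le_of_mul_le_mul_right (by rwa [zero_mul]) hpos

theorem nonneg_of_hasEigenvector_lie_of_apply_eq_zero {A B : Module.End 𝕜 W} {μ : 𝕜} {v : W}
    (hadj : ∀ u v, ⟪A u, v⟫_𝕜 = ⟪u, B v⟫_𝕜) (hv : ⁅B, A⁆.HasEigenvector μ v) (hBv : B v = 0) :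
    0 ≤ μ := by
  have hBA : B (A v) = μ • v := by simpa [Ring.lie_def, hBv] using hv.apply_eq_smul
  have hBAv : Module.End.HasEigenvector (B ∘ₗ A) μ v :=
    ⟨Module.End.mem_eigenspace_iff.mpr hBA, hv.2⟩
  exact nonneg_of_isPositive_of_hasEigenvalue (isPositive_comp_of_inner_map_eq hadj)
    (Module.End.hasEigenvalue_of_hasEigenvector hBAv)

theorem natCast_le_weight_of_pow_succ_apply_eq_zero {Lm1 L0 L1 : Module.End 𝕜 W}
    {s : 𝕜} {w : W} {n : ℕ} (hadj : ∀ u v, ⟪Lm1 u, v⟫_𝕜 = ⟪u, L1 v⟫_𝕜)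
    (hcomm : ⁅L1, Lm1⁆ = 2 • L0) (hcomm' : ⁅L0, L1⁆ = -L1) (hw : w ∈ L0.eigenspace s)
    (hne : (L1 ^ n) w ≠ 0) (hzero : (L1 ^ (n + 1)) w = 0) : (n : 𝕜) ≤ s := by
  have hweight : L0 ((L1 ^ n) w) = (s - n) • (L1 ^ n) w := by
    have hmem := pow_apply_mem_eigenspace_add_of_lie_eq_smul (c := -1) (by simpa using hcomm') hw n
    simpa [sub_eq_add_neg] using Module.End.mem_eigenspace_iff.mp hmem
  have heigen : ⁅L1, Lm1⁆.HasEigenvector (2 * (s - n)) ((L1 ^ n) w) := by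
    refine ⟨Module.End.mem_eigenspace_iff.mpr ?_, hne⟩
    rw [hcomm, LinearMap.smul_apply, hweight, two_mul, add_smul, two_nsmul]
  have hkill : L1 ((L1 ^ n) w) = 0 := by rwa [← Module.End.mul_apply, ← pow_succ']
  have htwo : 0 ≤ 2 * (s - n) := nonneg_of_hasEigenvector_lie_of_apply_eq_zero hadj heigen hkill
  exact sub_nonneg.mp (le_of_mul_le_mul_left (by rwa [mul_zero]) (zero_lt_two' 𝕜))

theorem stmt1_general (Lm1 L0 L1 : W →ₗ[𝕜] W)
    (hadj1 : ∀ u v : W, ⟪Lm1 u, v⟫_𝕜 = ⟪u, L1 v⟫_𝕜)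
    (hcomm : L1 ∘ₗ Lm1 - Lm1 ∘ₗ L1 = 2 • L0)
    (hcomm' : L0 ∘ₗ L1 - L1 ∘ₗ L0 = -L1)
    (w : W) (hw : w ≠ 0) (s : 𝕜) (hs : L0 w = s • w)
    (k : ℕ) (hk : (L1 ^ k) w = 0) :
    0 ≤ s := by
  obtain ⟨n, hne, hzero⟩ :=
    Nat.exists_not_and_succ_of_not_zero_of_exists (p := fun n => (L1 ^ n) w = 0) hw ⟨k, hk⟩
  calc (0 : 𝕜) ≤ n := n.cast_nonneg
    _ ≤ s := natCast_le_weight_of_pow_succ_apply_eq_zero hadj1 hcomm hcomm'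
      (Module.End.mem_eigenspace_iff.mpr hs) hne hzero

end Positivity

/-- With `L₋₁, L₀, L₁` as before and additionally `L₀L₁ - L₁L₀ = -L₁`,
if `w ≠ 0`, `L₀ w = s • w` and `L₁ᵏ w = 0` for some `k`, then `s` is real and nonnegative. -/
theorem stmt1 {W : Type*} [NormedAddCommGroup W] [InnerProductSpace ℂ W]
    (Lm1 L0 L1 : W →ₗ[ℂ] W)
    (hadj1 : ∀ u v : W, ⟪Lm1 u, v⟫_ℂ = ⟪u, L1 v⟫_ℂ)
    (hadj0 : ∀ u v : W, ⟪L0 u, v⟫_ℂ = ⟪u, L0 v⟫_ℂ)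
    (hcomm : L1 ∘ₗ Lm1 - Lm1 ∘ₗ L1 = 2 • L0)
    (hcomm' : L0 ∘ₗ L1 - L1 ∘ₗ L0 = -L1)
    (w : W) (hw : w ≠ 0) (s : ℂ) (hs : L0 w = s • w)
    (k : ℕ) (hk : (L1 ^ k) w = 0) :
    s.im = 0 ∧ 0 ≤ s.re :=
  (RCLike.nonneg_iff.mp (stmt1_general Lm1 L0 L1 hadj1 hcomm hcomm' w hw s hs k hk)).symm
end

section
/- Let c : ℝ → ℂ be a summable function (so in particular its support is countable). If for every t ∈ ℝ the unconditional sum ∑'_{s∈ℝ} c(s)·exp(i·s·t) equals 0, then c(s) = 0 for every s ∈ ℝ. -/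
/-!
The functions `a : ι → ℂ` with `∑ a s • c s = 0` form a linear subspace. It contains the evaluation
functions `s ↦ χ s m` of a family of characters, and these are closed under multiplication, so it
contains the algebra they generate. For a fixed `s₀` and `m`, the average of `1` and
`s ↦ conj (χ s₀ m) * χ s m` lies in this algebra, equals `1` at `s₀`, and has modulus less than `1`
wherever `χ s m ≠ χ s₀ m`. As distinct characters are separated by some `m`, products of high powers
of such averages converge pointwise to the indicator of `s₀` while staying bounded by `1`, and
dominated convergence turns `∑ a s • c s = 0` into `c s₀ = 0`.
-/

open Filter Topology ComplexConjugate

section PeakFunctions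

variable {ι : Type*} {s₀ : ι}

lemma exists_mem_adjoin_singleton_peak {a : ι → ℂ} (ha : ∀ s, ‖a s‖ ≤ 1) (ha₀ : ‖a s₀‖ = 1) :
    ∃ p ∈ Algebra.adjoin ℂ {a}, p s₀ = 1 ∧ (∀ s, ‖p s‖ ≤ 1) ∧ ∀ s, a s ≠ a s₀ → ‖p s‖ < 1 := by
  have conj_mul_self : conj (a s₀) * a s₀ = 1 := by simp [Complex.conj_mul', ha₀]
  have norm_conj_mul_le (s : ι) : ‖conj (a s₀) * a s‖ ≤ 1 := by simpa [ha₀] using ha s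
  let p : ι → ℂ := (1 / 2 : ℝ) • (1 : ι → ℂ) + (1 / 2 : ℝ) • conj (a s₀) • a
  have p_eq_one {s : ι} (hs : a s = a s₀) : p s = 1 := by
    simp only [p, Pi.add_apply, Pi.smul_apply, Pi.one_apply, smul_eq_mul, hs, conj_mul_self,
      ← add_smul, add_halves, one_smul]
  have norm_p_lt_one {s : ι} (hs : a s ≠ a s₀) : ‖p s‖ < 1 := by
    have one_ne : 1 ≠ conj (a s₀) * a s := fun h ↦ hs <|
      mul_left_cancel₀ (left_ne_zero_of_mul_eq_one conj_mul_self) (h.symm.trans conj_mul_self.symm)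
    exact norm_combo_lt_of_ne norm_one.le (norm_conj_mul_le s) one_ne one_half_pos one_half_pos
      (add_halves 1)
  refine ⟨p, ?_, p_eq_one rfl, fun s ↦ ?_, fun s ↦ norm_p_lt_one⟩
  · have a_mem : a ∈ Algebra.adjoin ℂ {a} := Algebra.self_mem_adjoin_singleton ℂ a
    simp only [p, ← Complex.coe_smul]
    exact add_mem (Subalgebra.smul_mem _ (one_mem _) _)
      (Subalgebra.smul_mem _ (Subalgebra.smul_mem _ a_mem _) _)
  · by_cases hs : a s = a s₀
    · exact (p_eq_one hs).symm ▸ norm_one.le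
    · exact (norm_p_lt_one hs).le

lemma tendsto_prod_pow_single [DecidableEq ι] {𝕜 : Type*} [NormedField 𝕜] {p : ι → ι → 𝕜}
    (hp₀ : ∀ j, p j s₀ = 1) (hp_le : ∀ j s, ‖p j s‖ ≤ 1) (hp_lt : ∀ s ≠ s₀, ‖p s s‖ < 1) :
    Tendsto (fun x : Finset ι × ℕ ↦ ∏ j ∈ x.1, p j ^ x.2) atTop (𝓝 (Pi.single s₀ 1)) := by
  refine tendsto_pi_nhds.2 fun s ↦ ?_
  simp only [Finset.prod_apply, Pi.pow_apply]
  rcases eq_or_ne s s₀ with rfl | hs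
  · simp [hp₀]
  rw [Pi.single_eq_of_ne hs, ← prod_atTop_atTop_eq]
  have tendsto_pow : Tendsto (fun x : Finset ι × ℕ ↦ ‖p s s‖ ^ x.2) (atTop ×ˢ atTop) (𝓝 0) :=
    (tendsto_pow_atTop_nhds_zero_of_lt_one (norm_nonneg _) (hp_lt s hs)).comp tendsto_snd
  have eventually_mem : ∀ᶠ x : Finset ι × ℕ in atTop ×ˢ atTop, s ∈ x.1 :=
    tendsto_fst.eventually ((eventually_ge_atTop {s}).mono fun _ ↦ Finset.singleton_subset_iff.1)
  refine squeeze_zero_norm' (eventually_mem.mono fun x hsx ↦ ?_) tendsto_pow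
  calc ‖∏ j ∈ x.1, p j s ^ x.2‖
      = ‖p s s‖ ^ x.2 * ∏ j ∈ x.1.erase s, ‖p j s‖ ^ x.2 := by
        simp only [norm_prod, norm_pow, Finset.mul_prod_erase _ (fun j ↦ ‖p j s‖ ^ x.2) hsx]
    _ ≤ ‖p s s‖ ^ x.2 :=
        mul_le_of_le_one_right (by positivity) <| Finset.prod_le_one (fun _ _ ↦ by positivity)
          fun j _ ↦ pow_le_one₀ (norm_nonneg _) (hp_le j s)

lemma exists_tendsto_single_of_separates [DecidableEq ι] {S : Set (ι → ℂ)}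
    (hS_le : ∀ a ∈ S, ∀ s, ‖a s‖ ≤ 1) (hS₀ : ∀ a ∈ S, ‖a s₀‖ = 1)
    (hS_sep : ∀ s ≠ s₀, ∃ a ∈ S, a s ≠ a s₀) :
    ∃ w : Finset ι × ℕ → ι → ℂ, (∀ x, w x ∈ Algebra.adjoin ℂ S) ∧ (∀ x s, ‖w x s‖ ≤ 1) ∧
      Tendsto w atTop (𝓝 (Pi.single s₀ 1)) := by
  have exists_peak (j : ι) :
      ∃ p ∈ Algebra.adjoin ℂ S, p s₀ = 1 ∧ (∀ s, ‖p s‖ ≤ 1) ∧ (j ≠ s₀ → ‖p j‖ < 1) := by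
    by_cases hj : j = s₀
    · exact ⟨1, one_mem _, rfl, by simp, fun hne ↦ absurd hj hne⟩
    obtain ⟨a, haS, ha⟩ := hS_sep j hj
    obtain ⟨p, hp_mem, hp₀, hp_le, hp_lt⟩ :=
      exists_mem_adjoin_singleton_peak (hS_le a haS) (hS₀ a haS)
    exact ⟨p, Algebra.adjoin_mono (Set.singleton_subset_iff.2 haS) hp_mem, hp₀, hp_le,
      fun _ ↦ hp_lt j ha⟩
  choose p hp_mem hp₀ hp_le hp_lt using exists_peak
  refine ⟨fun x ↦ ∏ j ∈ x.1, p j ^ x.2, fun x ↦ prod_mem fun j _ ↦ pow_mem (hp_mem j) x.2,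
    fun x s ↦ ?_, tendsto_prod_pow_single hp₀ hp_le hp_lt⟩
  simp only [Finset.prod_apply, Pi.pow_apply, norm_prod, norm_pow]
  exact Finset.prod_le_one (fun _ _ ↦ by positivity)
    fun j _ ↦ pow_le_one₀ (norm_nonneg _) (hp_le j s)

end PeakFunctions

section Annihilators

variable {ι E : Type*}

lemma hasSum_smul_zero_of_mem_adjoin {R : Type*} [CommSemiring R] [AddCommMonoid E] [Module R E]
    [TopologicalSpace E] [ContinuousAdd E] [ContinuousConstSMul R E] {c : ι → E}
    {S : Submonoid (ι → R)} (h : ∀ a ∈ S, HasSum (fun s ↦ a s • c s) 0) {a : ι → R}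
    (ha : a ∈ Algebra.adjoin R (S : Set (ι → R))) : HasSum (fun s ↦ a s • c s) 0 := by
  rw [← Subalgebra.mem_toSubmodule, Algebra.adjoin_eq_span, Submonoid.closure_eq] at ha
  induction ha using Submodule.span_induction with
  | mem a ha => exact h a ha
  | zero => simp
  | add a b _ _ hsum_a hsum_b => simpa [add_smul] using hsum_a.add hsum_b
  | smul r a _ hsum_a => simpa [mul_smul] using hsum_a.const_smul r

variable [NormedAddCommGroup E] [CompleteSpace E] {c : ι → E}

lemma tendsto_tsum_smul_of_norm_le {𝕜 α : Type*} [NormedField 𝕜] [NormedSpace 𝕜 E] {l : Filter α}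
    {a : α → ι → 𝕜} {b : ι → 𝕜} {C : ℝ} (hc : Summable (‖c ·‖)) (ha_le : ∀ x s, ‖a x s‖ ≤ C)
    (hab : Tendsto a l (𝓝 b)) :
    Tendsto (fun x ↦ ∑' s, a x s • c s) l (𝓝 (∑' s, b s • c s)) := by
  refine tendsto_tsum_of_dominated_convergence (hc.mul_left C)
    (fun s ↦ (tendsto_pi_nhds.1 hab s).smul_const (c s)) (.of_forall fun x s ↦ ?_)
  rw [norm_smul]
  exact mul_le_mul_of_nonneg_right (ha_le x s) (norm_nonneg _)

variable [NormedSpace ℂ E]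

theorem eq_zero_of_tsum_smul_eq_zero_of_separates {S : Submonoid (ι → ℂ)} {s₀ : ι}
    (hS_le : ∀ a ∈ S, ∀ s, ‖a s‖ ≤ 1) (hS₀ : ∀ a ∈ S, ‖a s₀‖ = 1)
    (hS_sep : ∀ s ≠ s₀, ∃ a ∈ S, a s ≠ a s₀) (hc : Summable (‖c ·‖))
    (h : ∀ a ∈ S, ∑' s, a s • c s = 0) : c s₀ = 0 := by
  classical
  have hasSum_zero_of_mem : ∀ a ∈ S, HasSum (fun s ↦ a s • c s) 0 := fun a ha ↦ by
    have summable_smul : Summable fun s ↦ a s • c s := hc.of_norm_bounded fun s ↦ by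
      rw [norm_smul]
      exact mul_le_of_le_one_left (norm_nonneg _) (hS_le a ha s)
    exact h a ha ▸ summable_smul.hasSum
  obtain ⟨w, hw_mem, hw_le, hw_tendsto⟩ := exists_tendsto_single_of_separates hS_le hS₀ hS_sep
  have tsum_w (x : Finset ι × ℕ) : ∑' s, w x s • c s = 0 :=
    (hasSum_smul_zero_of_mem_adjoin hasSum_zero_of_mem (hw_mem x)).tsum_eq
  have tsum_single : ∑' s, (Pi.single s₀ 1 : ι → ℂ) s • c s = c s₀ := by
    simp [Pi.single_apply, ite_smul]
  have tendsto_tsum_w := tendsto_tsum_smul_of_norm_le hc hw_le hw_tendsto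
  simp only [tsum_w, tsum_single] at tendsto_tsum_w
  exact tendsto_nhds_unique tendsto_tsum_w tendsto_const_nhds

end Annihilators

theorem stmt3_general {ι M E : Type*} [Monoid M] [NormedAddCommGroup E] [NormedSpace ℂ E]
    [CompleteSpace E] {χ : ι → M →* Circle} (hχ : Function.Injective χ) {c : ι → E}
    (hc : Summable (‖c ·‖)) (h : ∀ m, ∑' s, (χ s m : ℂ) • c s = 0) (s₀ : ι) : c s₀ = 0 := by
  let evaluations : M →* ι → ℂ := MonoidHom.pi fun s ↦ Circle.coeHom.comp (χ s)
  refine eq_zero_of_tsum_smul_eq_zero_of_separates (S := MonoidHom.mrange evaluations)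
    ?_ ?_ (fun s hs ↦ ?_) hc ?_
  · rintro _ ⟨m, rfl⟩ s
    exact (Circle.norm_coe (χ s m)).le
  · rintro _ ⟨m, rfl⟩
    exact Circle.norm_coe (χ s₀ m)
  · obtain ⟨m, hm⟩ := DFunLike.ne_iff.1 (hχ.ne hs)
    exact ⟨evaluations m, ⟨m, rfl⟩, Circle.coe_injective.ne hm⟩
  · rintro _ ⟨m, rfl⟩
    exact h m

lemma injective_probChar_mulShift : Function.Injective Real.probChar.mulShift :=
  AddChar.to_mulShift_inj_of_isPrimitive (.of_ne_one Real.probChar_ne_one)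

/-- If `c : ℝ → ℂ` is summable and `∑'_{s} c s · exp(i s t) = 0` for all
real `t`, then `c = 0`. -/
theorem stmt3 (c : ℝ → ℂ) (hc : Summable c)
    (h : ∀ t : ℝ, ∑' s : ℝ, c s * Complex.exp (Complex.I * (s : ℂ) * (t : ℂ)) = 0) :
    ∀ s : ℝ, c s = 0 := by
  refine stmt3_general (AddChar.toMonoidHomEquiv.injective.comp injective_probChar_mulShift)
    hc.norm fun t ↦ (tsum_congr fun s ↦ ?_).trans (h t.toAdd)
  simp [AddChar.mulShift_apply, Real.probChar_apply, mul_comm, mul_assoc]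
end
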